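/- Let p be a prime. For k ≥ 0 define L_p^{(k)} : V(ℤ_p) → {0,1} by L_p^{(k)}(f) = 1 if and only if there exists a ℚ_p-soluble g ∈ V(ℤ_p) with g ≡ f (mod p^{2k}V(ℤ_p)); set ℓ_p^{(0)} := L_p^{(0)} and ℓ_p^{(k)} := L_p^{(k)} − L_p^{(k−1)} for k ≥ 1. Then: (i) L_p^{(0)} ≡ 1 and each |ℓ_p^{(k)}| ≤ 1; (ii) each ℓ_p^{(k)} factors through reduction modulo p^{2k} and is PGL₂(ℤ_p)-invariant; (iii) for every f ∈ V(ℤ_p) with Δ(f) ≠ 0, ℓ_p(f) = Σ_{k≥0} ℓ_p^{(k)}(f), where ℓ_p(f) = 1 if f is ℚ_p-soluble and ℓ_p(f) = 0 otherwise; and (iv) for k ≥ 1, if ℓ_p^{(k)}(f) ≠ 0 then p^{2k} divides Δ(f) when p is odd, and 2^{2k−2} divides Δ(f) when p = 2. -/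

import Mathlib

noncomputable section

namespace BQPaper

/-- A binary quartic form `a x⁴ + b x³y + c x²y² + d xy³ + e y⁴` over `R`,
recorded by its coefficients. -/
structure BQ (R : Type*) where
  a : R
  b : R
  c : R
  d : R
  e : R

/-- A 2×2 matrix `!![p, q; r, s]`, recorded by its entries. -/
structure Mat2 (R : Type*) where
  p : R
  q : R
  r : R
  s : R

variable {R S : Type*} [CommRing R] [CommRing S]

def Mat2.det (m : Mat2 R) : R := m.p * m.s - m.q * m.r

/-- Matrix product. -/
def Mat2.mul (m n : Mat2 R) : Mat2 R :=
  ⟨m.p * n.p + m.q * n.r, m.p * n.q + m.q * n.s,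
   m.r * n.p + m.s * n.r, m.r * n.q + m.s * n.s⟩

/-- Scalar multiple of a matrix. -/
def Mat2.smul (z : R) (m : Mat2 R) : Mat2 R := ⟨z * m.p, z * m.q, z * m.r, z * m.s⟩

def Mat2.map (φ : R →+* S) (m : Mat2 R) : Mat2 S := ⟨φ m.p, φ m.q, φ m.r, φ m.s⟩

/-- Evaluation of a binary quartic form at `(x, y)`. -/
def BQ.eval (f : BQ R) (x y : R) : R :=
  f.a * x ^ 4 + f.b * x ^ 3 * y + f.c * x ^ 2 * y ^ 2 + f.d * x * y ^ 3 + f.e * y ^ 4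

/-- The invariant `I(f) = 12ae − 3bd + c²`. -/
def BQ.invI (f : BQ R) : R := 12 * f.a * f.e - 3 * f.b * f.d + f.c ^ 2

/-- The invariant `J(f) = 72ace + 9bcd − 27ad² − 27eb² − 2c³`. -/
def BQ.invJ (f : BQ R) : R :=
  72 * f.a * f.c * f.e + 9 * f.b * f.c * f.d - 27 * f.a * f.d ^ 2
    - 27 * f.e * f.b ^ 2 - 2 * f.c ^ 3

/-- The discriminant of a binary quartic form; one has `Δ = (4I³ − J²)/27`. -/
def BQ.disc (f : BQ R) : R :=
  256 * f.a ^ 3 * f.e ^ 3 - 192 * f.a ^ 2 * f.b * f.d * f.e ^ 2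
    - 128 * f.a ^ 2 * f.c ^ 2 * f.e ^ 2 + 144 * f.a ^ 2 * f.c * f.d ^ 2 * f.e
    - 27 * f.a ^ 2 * f.d ^ 4 + 144 * f.a * f.b ^ 2 * f.c * f.e ^ 2
    - 6 * f.a * f.b ^ 2 * f.d ^ 2 * f.e - 80 * f.a * f.b * f.c ^ 2 * f.d * f.e
    + 18 * f.a * f.b * f.c * f.d ^ 3 + 16 * f.a * f.c ^ 4 * f.e
    - 4 * f.a * f.c ^ 3 * f.d ^ 2 - 27 * f.b ^ 4 * f.e ^ 2
    + 18 * f.b ^ 3 * f.c * f.d * f.e - 4 * f.b ^ 3 * f.d ^ 3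
    - 4 * f.b ^ 2 * f.c ^ 3 * f.e + f.b ^ 2 * f.c ^ 2 * f.d ^ 2

/-- Multiplication of all coefficients of a form by a scalar. -/
def BQ.rsmul (t : R) (f : BQ R) : BQ R := ⟨t * f.a, t * f.b, t * f.c, t * f.d, t * f.e⟩

/-- Substitution action of a 2×2 matrix on binary quartic forms:
`(m • f)(x,y) = f((x,y)·m) = f(px + ry, qx + sy)` for `m = !![p, q; r, s]`. -/
def BQ.subst (m : Mat2 R) (f : BQ R) : BQ R where
  a := f.a * m.p ^ 4 + f.b * m.p ^ 3 * m.q + f.c * m.p ^ 2 * m.q ^ 2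
      + f.d * m.p * m.q ^ 3 + f.e * m.q ^ 4
  b := 4 * f.a * m.p ^ 3 * m.r + f.b * m.p ^ 3 * m.s + 3 * f.b * m.p ^ 2 * m.q * m.r
      + 2 * f.c * m.p ^ 2 * m.q * m.s + 2 * f.c * m.p * m.q ^ 2 * m.r
      + 3 * f.d * m.p * m.q ^ 2 * m.s + f.d * m.q ^ 3 * m.r + 4 * f.e * m.q ^ 3 * m.s
  c := 6 * f.a * m.p ^ 2 * m.r ^ 2 + 3 * f.b * m.p ^ 2 * m.r * m.s
      + 3 * f.b * m.p * m.q * m.r ^ 2 + f.c * m.p ^ 2 * m.s ^ 2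
      + 4 * f.c * m.p * m.q * m.r * m.s + f.c * m.q ^ 2 * m.r ^ 2
      + 3 * f.d * m.p * m.q * m.s ^ 2 + 3 * f.d * m.q ^ 2 * m.r * m.s
      + 6 * f.e * m.q ^ 2 * m.s ^ 2
  d := 4 * f.a * m.p * m.r ^ 3 + 3 * f.b * m.p * m.r ^ 2 * m.s + f.b * m.q * m.r ^ 3
      + 2 * f.c * m.p * m.r * m.s ^ 2 + 2 * f.c * m.q * m.r ^ 2 * m.s
      + f.d * m.p * m.s ^ 3 + 3 * f.d * m.q * m.r * m.s ^ 2 + 4 * f.e * m.q * m.s ^ 3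
  e := f.a * m.r ^ 4 + f.b * m.r ^ 3 * m.s + f.c * m.r ^ 2 * m.s ^ 2
      + f.d * m.r * m.s ^ 3 + f.e * m.s ^ 4

/-- The twisted action `(γ·f)(x,y) = f((x,y)·γ)/det(γ)²`, which descends to `PGL₂`.
(`Ring.inverse` is the genuine inverse when `det` is a unit.) -/
def BQ.twist (m : Mat2 R) (f : BQ R) : BQ R :=
  BQ.rsmul (Ring.inverse m.det ^ 2) (f.subst m)

/-- Coefficientwise map of forms along a ring homomorphism. -/
def BQ.map (φ : R →+* S) (f : BQ R) : BQ S := ⟨φ f.a, φ f.b, φ f.c, φ f.d, φ f.e⟩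

end BQPaper

namespace BQPaper

open scoped Classical

variable {p : ℕ} [Fact p.Prime]

/-- A binary quartic form `f` over `ℤ_p` is `ℚ_p`-soluble if `z² = f(x,y)` has a
solution with `(x,y) ≠ (0,0)` in `ℚ_p`. -/
def SolubleP (f : BQ ℤ_[p]) : Prop :=
  ∃ x y z : ℚ_[p], ¬(x = 0 ∧ y = 0) ∧ z ^ 2 = (f.map (PadicInt.Coe.ringHom)).eval x y

/-- The characteristic function of local solubility. -/
def ellP (f : BQ ℤ_[p]) : ℝ := if SolubleP f then 1 else 0

/-- Coefficientwise congruence `f ≡ g (mod p^j V(ℤ_p))`. -/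
def CongMod (j : ℕ) (f g : BQ ℤ_[p]) : Prop :=
  (p : ℤ_[p]) ^ j ∣ (f.a - g.a) ∧ (p : ℤ_[p]) ^ j ∣ (f.b - g.b) ∧
  (p : ℤ_[p]) ^ j ∣ (f.c - g.c) ∧ (p : ℤ_[p]) ^ j ∣ (f.d - g.d) ∧
  (p : ℤ_[p]) ^ j ∣ (f.e - g.e)

/-- `L_p^{(k)}(f) = 1` iff some `g ≡ f (mod p^{2k})` is `ℚ_p`-soluble. -/
def LP (k : ℕ) (f : BQ ℤ_[p]) : ℝ :=
  if ∃ g : BQ ℤ_[p], SolubleP g ∧ CongMod (2 * k) f g then 1 else 0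

/-- `ℓ_p^{(0)} = L_p^{(0)}` and `ℓ_p^{(k)} = L_p^{(k)} − L_p^{(k−1)}` for `k ≥ 1`. -/
def ellPk : ℕ → BQ ℤ_[p] → ℝ
  | 0, f => LP 0 f
  | (k + 1), f => LP (k + 1) f - LP k f


lemma ff3 : ∀ a e : ZMod 3, (∀ z, a ≠ z^2) → (∀ z, e ≠ z^2) → ∀ b c d : ZMod 3,
    (∀ x z : ZMod 3, a*x^4+b*x^3+c*x^2+d*x+e ≠ z^2) → 
    8*a^2*d = 4*a*b*c-b^3 ∧ 64*a^3*e = (4*a*c-b^2)^2 := by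
  decide +kernel

lemma ff5 : ∀ a e : ZMod 5, (∀ z, a ≠ z^2) → (∀ z, e ≠ z^2) → ∀ b c d : ZMod 5,
    (∀ x z : ZMod 5, a*x^4+b*x^3+c*x^2+d*x+e ≠ z^2) → 
    8*a^2*d = 4*a*b*c-b^3 ∧ 64*a^3*e = (4*a*c-b^2)^2 := by
  decide +kernel

open Polynomial in
lemma ff7 (p : ℕ) [Fact p.Prime] (hp : 7 ≤ p) (a b c d e : ZMod p) (ha : a ≠ 0)
    (h : ∀ x z : ZMod p, a*x^4+b*x^3+c*x^2+d*x+e ≠ z^2) :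
    8*a^2*d = 4*a*b*c-b^3 ∧ 64*a^3*e = (4*a*c-b^2)^2 := by
  have hodd : p % 2 = 1 := by
    rcases (Fact.out : p.Prime).eq_two_or_odd with h | h <;> omega
  obtain ⟨m, hm⟩ : ∃ m, p = 2*m+1 := ⟨p/2, by omega⟩
  have hm2 : (2 * (m : ZMod p)) = -1 := by
    have h0 : ((p : ℕ) : ZMod p) = 0 := by simp
    have this : ((2*m+1 : ℕ) : ZMod p) = 0 := (congrArg (Nat.cast : ℕ → ZMod p) hm).symm.trans h0
    push_cast at this
    linear_combination this
  have h2 : (2 : ZMod p) ≠ 0 := by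
    intro h0; rw [h0] at hm2; simp at hm2
  set f : (ZMod p)[X] := C a * X^4 + C b * X^3 + C c * X^2 + C d * X + C e with hf
  have hfdeg : f.natDegree ≤ 4 := by rw [hf]; compute_degree
  have hf' : derivative f = C (4*a) * X^3 + C (3*b) * X^2 + C (2*c) * X + C d := by
    rw [hf]; simp only [derivative_add, derivative_mul, derivative_C, derivative_X_pow, derivative_X, map_mul]
    simp; ring
  have hf'' : derivative (derivative f) = C (12*a) * X^2 + C (6*b) * X + C (2*c) := by
    rw [hf']; simp only [derivative_add, derivative_mul, derivative_C, derivative_X_pow, derivative_X, map_mul]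
    simp; simp only [map_ofNat]; ring
  have hf'deg : (derivative f).natDegree ≤ 3 := by rw [hf']; compute_degree
  have hf''deg : (derivative (derivative f)).natDegree ≤ 2 := by rw [hf'']; compute_degree
  have hev : ∀ x, (f^m + 1).eval x = 0 := by
    intro x
    have hx : f.eval x = a*x^4+b*x^3+c*x^2+d*x+e := by simp [hf]
    have h0 : f.eval x ≠ 0 := by
      rw [hx]; simpa using h x 0
    have h1 : ¬ IsSquare (f.eval x) := by
      rintro ⟨z, hz⟩; exact h x z (by rw [← hx, hz]; ring)
    have h3 := ZMod.pow_div_two_eq_neg_one_or_one p h0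
    rw [ZMod.euler_criterion p h0] at h1
    have hpm : p / 2 = m := by omega
    rw [hpm] at h1 h3
    simp only [eval_add, eval_pow, eval_one]
    rcases h3 with h3 | h3
    · exact absurd h3 h1
    · rw [h3]; ring
  set P : (ZMod p)[X] := X^p - X with hP
  have hPdeg : P.natDegree = p := FiniteField.X_pow_card_sub_X_natDegree_eq _ (by omega)
  have hP0 : P ≠ 0 := FiniteField.X_pow_card_sub_X_ne_zero _ (by omega)
  have hPm : P.Monic := by
    rw [hP]; exact monic_X_pow_sub (by rw [degree_X]; exact_mod_cast (by omega : 1 < p))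
  have hP' : derivative P = -1 := by
    rw [hP]; simp [derivative_X_pow]
  have hdvd : P ∣ f^m+1 := by
    have hroots : P.roots = Finset.univ.val := by
      have := FiniteField.roots_X_pow_card_sub_X (ZMod p)
      rwa [ZMod.card] at this
    have hcard : Multiset.card P.roots = P.natDegree := by
      rw [hroots, hPdeg]; simp
    rw [← prod_multiset_X_sub_C_of_monic_of_roots_card_eq hPm hcard, hroots]
    change (∏ x : ZMod p, (X - C x)) ∣ _
    apply Finset.prod_dvd_of_coprime
    · intro x _ y _ hxy
      exact pairwise_coprime_X_sub_C (fun _ _ h => h) hxy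
    · intro x _
      exact dvd_iff_isRoot.mpr (hev x)
  obtain ⟨H, hH⟩ := hdvd
  have degP : ∀ A : (ZMod p)[X], A ≠ 0 → (P * A).natDegree = p + A.natDegree := by
    intro A hA; rw [natDegree_mul hP0 hA, hPdeg]
  have hHdeg : H.natDegree ≤ p - 2 := by
    by_cases h0 : H = 0
    · simp [h0]
    have h3 := degP H h0
    rw [← hH] at h3
    have h4 : (f^m+1).natDegree ≤ m*4 := by
      refine (natDegree_add_le _ _).trans (max_le ((natDegree_pow_le).trans ?_) (by simp))
      exact Nat.mul_le_mul_left _ hfdeg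
    omega
  have hg' : 2 * f * derivative (f^m) = - derivative f * f^m := by
    obtain ⟨m, rfl⟩ : ∃ n, m = n+1 := ⟨m-1, by omega⟩
    rw [derivative_pow_succ]
    have : (2 : (ZMod p)[X]) * C ((m:ZMod p)+1) = -1 := by
      have := congrArg (C : ZMod p → (ZMod p)[X]) hm2
      simpa [map_ofNat] using this
    linear_combination (f * f^m * derivative f) * this
  have hgd : derivative (f^m) = -H + P * derivative H := by
    have := congrArg derivative hH
    simp only [derivative_add, derivative_one, derivative_mul, hP'] at this
    linear_combination this
  have hgm : f^m = P*H - 1 := by linear_combination hH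
  rw [hgd, hgm] at hg'
  set q := 2 * f * derivative H + derivative f * H with hq
  have e1 : P * q = 2*f*H + derivative f := by
    rw [hq]; linear_combination hg'
  have hqdeg : q.natDegree ≤ 2 := by
    by_cases h0 : q = 0
    · simp [h0]
    have h3 := degP q h0
    rw [e1] at h3
    have h4 : (2*f*H + derivative f).natDegree ≤ p + 2 := by
      refine (natDegree_add_le _ _).trans (max_le ?_ (by omega))
      refine (natDegree_mul_le).trans ?_
      have : (2*f).natDegree ≤ 4 := by
        refine (natDegree_mul_le).trans ?_
        have : (2 : (ZMod p)[X]).natDegree = 0 := natDegree_ofNat 2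
        omega
      omega
    omega
  have e2 := congrArg derivative e1
  simp only [derivative_add, derivative_mul, hP', derivative_ofNat] at e2
  have e3 : P * (derivative f * q - 2 * f * derivative q) =
      derivative f ^ 2 - 2 * f * derivative (derivative f) - 4 * f * q := by
    have hq2 := hq
    linear_combination (derivative f) * e1 - 2 * f * e2 - 2*f*hq
  have e4 : derivative f ^ 2 - 2 * f * derivative (derivative f) - 4 * f * q = 0 := by
    by_contra hne
    have hne2 : derivative f * q - 2 * f * derivative q ≠ 0 := by
      intro h0; rw [h0, mul_zero] at e3; exact hne e3.symm
    have h3 := degP _ hne2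
    rw [e3] at h3
    have h2d : (2 : (ZMod p)[X]).natDegree = 0 := natDegree_ofNat 2
    have h4d : (4 : (ZMod p)[X]).natDegree = 0 := natDegree_ofNat 4
    have h4 : (derivative f ^ 2 - 2 * f * derivative (derivative f) - 4 * f * q).natDegree ≤ 6 := by
      refine (natDegree_sub_le _ _).trans (max_le ((natDegree_sub_le _ _).trans (max_le ?_ ?_)) ?_)
      · refine natDegree_pow_le.trans ?_; omega
      · refine natDegree_mul_le.trans ?_
        have := natDegree_mul_le (p := (2:(ZMod p)[X])) (q := f)
        omega
      · refine natDegree_mul_le.trans ?_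
        have := natDegree_mul_le (p := (4:(ZMod p)[X])) (q := f)
        omega
    omega
  clear_value q
  have hqe := eq_quadratic_of_degree_le_two (natDegree_le_iff_degree_le.mp hqdeg)
  generalize q.coeff 2 = q2 at hqe
  generalize q.coeff 1 = q1 at hqe
  generalize q.coeff 0 = q0 at hqe
  obtain ⟨r0, hr0⟩ : ∃ r0, r0 = 4*q0 + 4*c := ⟨_, rfl⟩
  obtain ⟨r1, hr1⟩ : ∃ r1, r1 = 4*q1 + 12*b := ⟨_, rfl⟩
  obtain ⟨r2, hr2⟩ : ∃ r2, r2 = 4*q2 + 24*a := ⟨_, rfl⟩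
  have key : C (16*a^2 - a*r2) * X^6 + C (24*a*b - a*r1-b*r2) * X^5
      + C (9*b^2+16*a*c - a*r0 - b*r1 - c*r2) * X^4
      + C (12*b*c+8*a*d - b*r0 - c*r1 - d*r2) * X^3
      + C (4*c^2+6*b*d - c*r0 - d*r1 - e*r2) * X^2
      + C (4*c*d - d*r0 - e*r1) * X + C (d^2 - e*r0) = 0 := by
    rw [← e4, hf'', hf', hqe, hf, hr0, hr1, hr2]
    simp only [map_add, map_sub, map_mul, map_pow, map_ofNat]
    ring
  have k6 := congrArg (coeff · 6) key
  have k5 := congrArg (coeff · 5) key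
  have k4 := congrArg (coeff · 4) key
  have k3 := congrArg (coeff · 3) key
  have k2 := congrArg (coeff · 2) key
  simp only [coeff_add, coeff_C_mul, coeff_X_pow, coeff_X, coeff_C, coeff_zero] at k6 k5 k4 k3 k2
  norm_num at k6 k5 k4 k3 k2
  have l2 : r2 = 16*a := by
    apply mul_left_cancel₀ ha; linear_combination -k6
  subst l2
  have l1 : r1 = 8*b := by
    apply mul_left_cancel₀ ha; linear_combination -k5
  subst l1
  have l0 : a*r0 = b^2 := by linear_combination -k4
  have d1 : 8*a^2*d = 4*a*b*c-b^3 := by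
    linear_combination -a*k3 - b*l0
  refine ⟨d1, ?_⟩
  have : 4*a*c^2 - 2*a*b*d - c*b^2 - 16*a^2*e = 0 := by
    linear_combination a*k2 + c*l0
  linear_combination (-4*a)*this - b*d1

lemma ffall (p : ℕ) [hpp : Fact p.Prime] (hp : p ≠ 2) (a b c d e : ZMod p) (ha : ∀ z, a ≠ z^2)
    (h : ∀ x z : ZMod p, a*x^4+b*x^3+c*x^2+d*x+e ≠ z^2) :
    8*a^2*d = 4*a*b*c-b^3 ∧ 64*a^3*e = (4*a*c-b^2)^2 := by
  by_cases h7 : 7 ≤ p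
  · exact ff7 p h7 a b c d e (by simpa using ha 0) h
  have h2 := hpp.out.two_le
  have he : ∀ z, e ≠ z^2 := by simpa using h 0
  have : p = 3 ∨ p = 5 := by
    have := hpp.out
    interval_cases p <;> first | omega | (exfalso; revert this; norm_num)
  rcases this with rfl | rfl
  · exact ff3 a e ha he b c d h
  · exact ff5 a e ha he b c d h
def Prim (x y : ℤ_[p]) : Prop := ¬ ((p : ℤ_[p]) ∣ x ∧ (p : ℤ_[p]) ∣ y)

def Sk (k : ℕ) (f : BQ ℤ_[p]) : Prop :=
  ∃ x y z : ℤ_[p], Prim x y ∧ (p : ℤ_[p]) ^ (2*k) ∣ f.eval x y - z^2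

def Sol (f : BQ ℤ_[p]) : Prop :=
  ∃ x y z : ℤ_[p], Prim x y ∧ f.eval x y = z^2

lemma not_dvd_iff (x : ℤ_[p]) : ¬ (p : ℤ_[p]) ∣ x ↔ IsUnit x := by
  rw [PadicInt.isUnit_iff, ← PadicInt.norm_lt_one_iff_dvd, not_lt]
  exact ⟨fun h => le_antisymm (PadicInt.norm_le_one _) h, fun h => h.ge⟩

lemma p_prime : Prime (p : ℤ_[p]) := PadicInt.prime_p

lemma prim_one (y : ℤ_[p]) : Prim 1 y := fun h => p_prime.not_dvd_one h.1

lemma prim_one' (x : ℤ_[p]) : Prim x 1 := fun h => p_prime.not_dvd_one h.2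

lemma Sol.sk {f : BQ ℤ_[p]} (h : Sol f) (k : ℕ) : Sk k f := by
  obtain ⟨x, y, z, h1, h2⟩ := h
  exact ⟨x, y, z, h1, by rw [h2, sub_self]; exact dvd_zero _⟩

lemma eval_map (f : BQ ℤ_[p]) (x y : ℤ_[p]) :
    (f.map (PadicInt.Coe.ringHom)).eval (x : ℚ_[p]) y = ((f.eval x y : ℤ_[p]) : ℚ_[p]) := by
  simp [BQ.eval, BQ.map, PadicInt.Coe.ringHom]; rfl

lemma sol_iff (f : BQ ℤ_[p]) : SolubleP f ↔ Sol f := by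
  constructor
  · rintro ⟨x, y, z, hxy, h⟩
    have aux : ∀ (X Y : ℤ_[p]) (Z : ℚ_[p]), Z^2 = (f.map (PadicInt.Coe.ringHom)).eval (X : ℚ_[p]) Y →
        ∃ Z' : ℤ_[p], f.eval X Y = Z'^2 := by
      intro X Y Z hZ
      rw [eval_map] at hZ
      have : ‖Z‖ ≤ 1 := by
        have h1 : ‖Z‖^2 ≤ 1 := by
          rw [← norm_pow, hZ]; exact PadicInt.norm_le_one _
        by_contra hc
        push Not at hc
        nlinarith
      obtain ⟨Z', rfl⟩ : ∃ Z' : ℤ_[p], (Z' : ℚ_[p]) = Z := ⟨⟨Z, this⟩, rfl⟩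
      refine ⟨Z', ?_⟩
      apply PadicInt.ext
      rw [← hZ, PadicInt.coe_pow]
    rcases le_total ‖y‖ ‖x‖ with hle | hle
    · have hx : x ≠ 0 := by
        rintro rfl
        apply hxy
        simpa using hle
      have h1 : ‖y/x‖ ≤ 1 := by
        rw [norm_div]; exact div_le_one_of_le₀ hle (norm_nonneg _)
      obtain ⟨Z, hZ⟩ := aux 1 ⟨y/x, h1⟩ (z/x^2) (by
        rw [div_pow, h]; simp only [BQ.eval, PadicInt.coe_one]; field_simp)
      exact ⟨1, _, Z, prim_one _, hZ⟩
    · have hx : y ≠ 0 := by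
        rintro rfl
        apply hxy
        simpa using hle
      have h1 : ‖x/y‖ ≤ 1 := by
        rw [norm_div]; exact div_le_one_of_le₀ hle (norm_nonneg _)
      obtain ⟨Z, hZ⟩ := aux ⟨x/y, h1⟩ 1 (z/y^2) (by
        rw [div_pow, h]; simp only [BQ.eval, PadicInt.coe_one]; field_simp)
      exact ⟨_, 1, Z, prim_one' _, hZ⟩
  · rintro ⟨x, y, z, hp, h⟩
    refine ⟨x, y, z, ?_, ?_⟩
    · rintro ⟨hx, hy⟩
      apply hp
      have hx : x = 0 := PadicInt.ext (by simpa using hx)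
      have hy : y = 0 := PadicInt.ext (by simpa using hy)
      simp [hx, hy]
    · rw [eval_map, h]; simp

lemma CongMod.symm {j : ℕ} {f g : BQ ℤ_[p]} (h : CongMod j f g) : CongMod j g f := by
  obtain ⟨h1, h2, h3, h4, h5⟩ := h
  exact ⟨(dvd_sub_comm).mp h1, (dvd_sub_comm).mp h2, (dvd_sub_comm).mp h3, (dvd_sub_comm).mp h4,
    (dvd_sub_comm).mp h5⟩

lemma CongMod.eval {j : ℕ} {f g : BQ ℤ_[p]} (h : CongMod j f g) (x y : ℤ_[p]) :
    (p : ℤ_[p])^j ∣ f.eval x y - g.eval x y := by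
  obtain ⟨h1, h2, h3, h4, h5⟩ := h
  have : f.eval x y - g.eval x y = (f.a-g.a)*x^4 + (f.b-g.b)*(x^3*y) + (f.c-g.c)*(x^2*y^2)
    + (f.d-g.d)*(x*y^3)+(f.e-g.e)*y^4 := by simp only [BQ.eval]; ring
  rw [this]
  exact dvd_add (dvd_add (dvd_add (dvd_add (h1.mul_right _) (h2.mul_right _)) (h3.mul_right _))
    (h4.mul_right _)) (h5.mul_right _)

lemma Sk.congr {k : ℕ} {f g : BQ ℤ_[p]} (h : CongMod (2*k) f g) (hg : Sk k g) : Sk k f := by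
  obtain ⟨x, y, z, h1, h2⟩ := hg
  refine ⟨x, y, z, h1, ?_⟩
  have := dvd_add (h.eval x y) h2
  convert! this using 1; ring

lemma sk_iff (k : ℕ) (f : BQ ℤ_[p]) :
    (∃ g : BQ ℤ_[p], SolubleP g ∧ CongMod (2 * k) f g) ↔ Sk k f := by
  constructor
  · rintro ⟨g, hg, h⟩
    exact Sk.congr h (((sol_iff g).mp hg).sk k)
  · rintro ⟨x, y, z, h1, h2⟩
    by_cases hx : (p : ℤ_[p]) ∣ x
    · have hy : IsUnit y := (not_dvd_iff y).mp (fun h => h1 ⟨hx, h⟩)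
      obtain ⟨i, hi⟩ := hy.exists_right_inv
      refine ⟨⟨f.a, f.b, f.c, f.d, f.e - (f.eval x y - z^2)*i^4⟩, (sol_iff _).mpr ⟨x, y, z, h1, ?_⟩, ?_⟩
      · have : y^4*i^4 = 1 := by rw [← mul_pow, hi, one_pow]
        have hE : f.eval x y = f.a * x ^ 4 + f.b * x ^ 3 * y + f.c * x ^ 2 * y ^ 2
          + f.d * x * y ^ 3 + f.e * y ^ 4 := rfl
        generalize f.eval x y = E at hE
        simp only [BQ.eval]
        linear_combination (-1)*(E - z^2) * this - hE
      · refine ⟨by simp, by simp, by simp, by simp, ?_⟩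
        simpa using h2.mul_right _
    · obtain ⟨i, hi⟩ := ((not_dvd_iff x).mp hx).exists_right_inv
      refine ⟨⟨f.a - (f.eval x y - z^2)*i^4, f.b, f.c, f.d, f.e⟩, (sol_iff _).mpr ⟨x, y, z, h1, ?_⟩, ?_⟩
      · have : x^4*i^4 = 1 := by rw [← mul_pow, hi, one_pow]
        have hE : f.eval x y = f.a * x ^ 4 + f.b * x ^ 3 * y + f.c * x ^ 2 * y ^ 2
          + f.d * x * y ^ 3 + f.e * y ^ 4 := rfl
        generalize f.eval x y = E at hE
        simp only [BQ.eval]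
        linear_combination (-1)*(E - z^2) * this - hE
      · refine ⟨?_, by simp, by simp, by simp, by simp⟩
        simpa using h2.mul_right _

lemma LP_eq (k : ℕ) (f : BQ ℤ_[p]) : LP k f = if Sk k f then 1 else 0 := by
  simp only [LP, sk_iff]

lemma Sk.mono {k : ℕ} {f : BQ ℤ_[p]} (h : Sk (k+1) f) : Sk k f := by
  obtain ⟨x, y, z, h1, h2⟩ := h
  exact ⟨x, y, z, h1, (pow_dvd_pow _ (by omega)).trans h2⟩

lemma sk_zero (f : BQ ℤ_[p]) : Sk 0 f := ⟨1, 0, 0, prim_one _, by simp⟩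

lemma subst_eval (m : Mat2 ℤ_[p]) (f : BQ ℤ_[p]) (x y : ℤ_[p]) :
    (f.subst m).eval x y = f.eval (m.p*x+m.r*y) (m.q*x+m.s*y) := by
  simp only [BQ.eval, BQ.subst]; ring

lemma prim_subst {m : Mat2 ℤ_[p]} (hm : IsUnit m.det) {x y : ℤ_[p]} (h : Prim x y) :
    Prim (m.p*x+m.r*y) (m.q*x+m.s*y) := by
  rintro ⟨h1, h2⟩
  have hd := (not_dvd_iff _).mpr hm
  apply h
  constructor
  · have : (p : ℤ_[p]) ∣ m.det * x := by
      have := dvd_sub (h1.mul_left m.s) (h2.mul_left m.r)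
      convert! this using 1; simp only [Mat2.det]; ring
    exact (p_prime.dvd_or_dvd this).resolve_left hd
  · have : (p : ℤ_[p]) ∣ m.det * y := by
      have := dvd_sub (h2.mul_left m.p) (h1.mul_left m.q)
      convert! this using 1; simp only [Mat2.det]; ring
    exact (p_prime.dvd_or_dvd this).resolve_left hd

lemma twist_eval (m : Mat2 ℤ_[p]) (f : BQ ℤ_[p]) (x y : ℤ_[p]) :
    (f.twist m).eval x y = Ring.inverse m.det ^ 2 * f.eval (m.p*x+m.r*y) (m.q*x+m.s*y) := by
  rw [← subst_eval]
  simp only [BQ.eval, BQ.twist, BQ.rsmul]; ring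

lemma sk_twist (k : ℕ) (m : Mat2 ℤ_[p]) (hm : IsUnit m.det) (f : BQ ℤ_[p]) :
    Sk k (f.twist m) ↔ Sk k f := by
  have hi := Ring.mul_inverse_cancel _ hm
  set i := Ring.inverse m.det with hidef
  constructor
  · rintro ⟨x, y, z, h1, h2⟩
    refine ⟨_, _, m.det * z, prim_subst hm h1, ?_⟩
    rw [twist_eval, ← hidef] at h2
    convert! h2.mul_left (m.det^2) using 1
    linear_combination (-1 * f.eval (m.p*x+m.r*y) (m.q*x+m.s*y)) * (m.det * i + 1) * hi
  · rintro ⟨X, Y, z, h1, h2⟩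
    have hX : m.p*(i*(m.s*X-m.r*Y)) + m.r*(i*(m.p*Y-m.q*X)) = X := by
      have hi' := hi
      rw [Mat2.det] at hi'
      linear_combination X * hi'
    have hY : m.q*(i*(m.s*X-m.r*Y)) + m.s*(i*(m.p*Y-m.q*X)) = Y := by
      have hi' := hi
      rw [Mat2.det] at hi'
      linear_combination Y * hi'
    refine ⟨i*(m.s*X-m.r*Y), i*(m.p*Y-m.q*X), i*z, ?_, ?_⟩
    · rintro ⟨h3, h4⟩
      apply h1
      have h5 := dvd_add (h3.mul_left m.p) (h4.mul_left m.r)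
      have h6 := dvd_add (h3.mul_left m.q) (h4.mul_left m.s)
      rw [hX] at h5
      rw [hY] at h6
      exact ⟨h5, h6⟩
    · rw [twist_eval, hX, hY, ← hidef]
      convert! h2.mul_left (i^2) using 1
      ring

lemma Sol.subst {m : Mat2 ℤ_[p]} (hm : m.det = 1) {f : BQ ℤ_[p]} (h : Sol (f.subst m)) : Sol f := by
  obtain ⟨x, y, z, h1, h2⟩ := h
  exact ⟨_, _, z, prim_subst (by rw [hm]; exact isUnit_one) h1, by rw [← subst_eval, h2]⟩

lemma disc_IJ (f : BQ ℤ_[p]) : 27 * f.disc = 4 * f.invI^3 - f.invJ^2 := by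
  simp only [BQ.disc, BQ.invI, BQ.invJ]; ring

lemma disc_subst (m : Mat2 ℤ_[p]) (f : BQ ℤ_[p]) (hm : m.det = 1) : (f.subst m).disc = f.disc := by
  have hI : (f.subst m).invI = m.det^4 * f.invI := by
    simp only [BQ.invI, BQ.subst, Mat2.det]; ring
  have hJ : (f.subst m).invJ = m.det^6 * f.invJ := by
    simp only [BQ.invJ, BQ.subst, Mat2.det]; ring
  have h27 : (27 : ℤ_[p]) ≠ 0 := by norm_num
  apply mul_left_cancel₀ h27
  rw [disc_IJ, disc_IJ, hI, hJ, hm]; ring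

lemma move (f : BQ ℤ_[p]) (x y : ℤ_[p]) (h : Prim x y) :
    ∃ g : BQ ℤ_[p], g.a = f.eval x y ∧ g.disc = f.disc ∧ (Sol g → Sol f) := by
  obtain ⟨m, hm, hp, hq⟩ : ∃ m : Mat2 ℤ_[p], m.det = 1 ∧ m.p = x ∧ m.q = y := by
    by_cases hx : (p : ℤ_[p]) ∣ x
    · obtain ⟨i, hi⟩ := ((not_dvd_iff y).mp (fun h' => h ⟨hx, h'⟩)).exists_right_inv
      exact ⟨⟨x, y, -i, 0⟩, by simp [Mat2.det, hi], rfl, rfl⟩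
    · obtain ⟨i, hi⟩ := ((not_dvd_iff x).mp hx).exists_right_inv
      exact ⟨⟨x, y, 0, i⟩, by simp [Mat2.det, hi], rfl, rfl⟩
  refine ⟨f.subst m, ?_, disc_subst m f hm, Sol.subst hm⟩
  simp only [BQ.subst, BQ.eval, hp, hq]

lemma sol_of_all (f : BQ ℤ_[p]) (h : ∀ k, Sk k f) : Sol f := by
  let K : Set (ℤ_[p] × ℤ_[p] × ℤ_[p]) := {v | Prim v.1 v.2.1}
  have hK : IsCompact K := by
    apply IsClosed.isCompact
    have : K = {v | ‖v.1‖ < 1 ∧ ‖v.2.1‖ < 1}ᶜ := by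
      ext v; simp only [K, Prim, PadicInt.norm_lt_one_iff_dvd, Set.mem_ofPred_eq, Set.mem_compl_iff]
    rw [this]
    apply IsOpen.isClosed_compl
    exact (isOpen_lt (f := fun v : ℤ_[p] × ℤ_[p] × ℤ_[p] => ‖v.1‖) (g := fun _ => 1)
      (by fun_prop) (by fun_prop)).inter
      (isOpen_lt (f := fun v : ℤ_[p] × ℤ_[p] × ℤ_[p] => ‖v.2.1‖) (g := fun _ => 1)
      (by fun_prop) (by fun_prop))
  have hne : K.Nonempty := ⟨(1, 0, 0), prim_one _⟩
  obtain ⟨v, hv, hmin⟩ := hK.exists_isMinOn hne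
    (f := fun v => ‖f.eval v.1 v.2.1 - v.2.2^2‖) (by
      apply Continuous.continuousOn
      simp only [BQ.eval]; fun_prop)
  refine ⟨v.1, v.2.1, v.2.2, hv, ?_⟩
  rw [← sub_eq_zero, ← norm_eq_zero]
  apply le_antisymm _ (norm_nonneg _)
  have hp1 : (1:ℝ) < p := by exact_mod_cast (Fact.out : p.Prime).one_lt
  have hlim : Filter.Tendsto (fun k : ℕ => ((p:ℝ)⁻¹)^k) Filter.atTop (nhds 0) :=
    tendsto_pow_atTop_nhds_zero_of_lt_one (by positivity) (inv_lt_one_of_one_lt₀ hp1)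
  refine ge_of_tendsto' hlim (fun k => ?_)
  obtain ⟨x, y, z, h1, h2⟩ := h k
  have h3 := hmin (a := (x, y, z)) h1
  simp only [Set.mem_ofPred_eq] at h3
  refine h3.trans ?_
  obtain ⟨w, hw⟩ := h2
  simp only [hw, norm_mul, norm_pow, PadicInt.norm_p]
  calc _ ≤ ((p:ℝ)⁻¹)^(2*k) * 1 := by gcongr; exact PadicInt.norm_le_one _
    _ ≤ _ := by
      rw [mul_one]; exact pow_le_pow_of_le_one (by positivity) (inv_lt_one_of_one_lt₀ hp1).le (by omega)

open Polynomial in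
lemma hensel4 (A B C' D E t : ℤ_[p])
    (h : ‖A+B*t+C'*t^2+D*t^3+E*t^4‖ < ‖B+2*C'*t+3*D*t^2+4*E*t^3‖^2) :
    ∃ s : ℤ_[p], A+B*s+C'*s^2+D*s^3+E*s^4 = 0 := by
  let F : ℤ_[p][X] := C A + C B * X + C C' * X^2 + C D * X^3 + C E * X^4
  have hF : ∀ s, F.aeval s = A+B*s+C'*s^2+D*s^3+E*s^4 := by
    intro s; simp [F]
  have hF' : F.derivative.aeval t = B+2*C'*t+3*D*t^2+4*E*t^3 := by
    simp [F, derivative_X_pow]; ring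
  obtain ⟨s, hs, -⟩ := hensels_lemma (F := F) (a := t) (by rw [hF, hF']; exact h)
  exact ⟨s, by rw [← hF, hs]⟩

lemma norm_lt_sq {x y : ℤ_[p]} {N n : ℕ} (hN : 2*n ≤ N) (hx : (p:ℤ_[p])^N ∣ x)
    (hy : ¬ (p:ℤ_[p])^n ∣ y) : ‖x‖ < ‖y‖^2 := by
  have hp1 : (1:ℝ) < p := by exact_mod_cast (Fact.out : p.Prime).one_lt
  have h1 : ‖x‖ ≤ (p:ℝ)^(-(2*n:ℕ):ℤ) := by
    rw [PadicInt.norm_le_pow_iff_mem_span_pow, Ideal.mem_span_singleton]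
    exact (pow_dvd_pow _ hN).trans hx
  have h2 : (p:ℝ)^(-n:ℤ) < ‖y‖ := by
    rw [← not_le, PadicInt.norm_le_pow_iff_mem_span_pow, Ideal.mem_span_singleton]
    exact hy
  have h3 : (p:ℝ)^(-(2*n:ℕ):ℤ) = ((p:ℝ)^(-n:ℤ))^2 := by
    rw [← zpow_natCast, ← zpow_mul]; congr 1; push_cast; ring
  rw [h3] at h1
  have h4 : (0:ℝ) < (p:ℝ)^(-n:ℤ) := by positivity
  exact h1.trans_lt (by gcongr)

lemma norm_lt_sq1 {x y : ℤ_[p]} (hx : (p:ℤ_[p]) ∣ x)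
    (hy : ¬ (p:ℤ_[p]) ∣ y) : ‖x‖ < ‖y‖^2 := by
  rw [not_dvd_iff, PadicInt.isUnit_iff] at hy
  rw [hy, one_pow, PadicInt.norm_lt_one_iff_dvd]; exact hx

lemma sqrt_of {a z : ℤ_[p]} (h : ‖a - z^2‖ < ‖2*z‖^2) : ∃ w, a = w^2 := by
  obtain ⟨s, hs⟩ := hensel4 (-a) 0 1 0 0 z (by
    rw [← norm_neg] at h
    convert! h using 2
    · ring
    · ring_nf)
  exact ⟨s, by linear_combination -hs⟩

lemma two_unit (hp : p ≠ 2) : ¬ (p:ℤ_[p]) ∣ 2 := by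
  intro h
  have := (PadicInt.norm_int_lt_one_iff_dvd (p := p) 2).mp (by
    rw [PadicInt.norm_lt_one_iff_dvd]; exact_mod_cast h)
  have : p ∣ 2 := by exact_mod_cast this
  exact hp ((Nat.prime_dvd_prime_iff_eq Fact.out Nat.prime_two).mp this)

lemma toZ (x : ℤ_[p]) : PadicInt.toZMod x = 0 ↔ (p:ℤ_[p]) ∣ x := by
  rw [← RingHom.mem_ker, PadicInt.ker_toZMod, PadicInt.maximalIdeal_eq_span_p, Ideal.mem_span_singleton]

lemma toZ_surj (x : ZMod p) : ∃ y : ℤ_[p], PadicInt.toZMod y = x :=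
  ZMod.ringHom_surjective PadicInt.toZMod x

open Polynomial in
lemma conic_mod (hp : p ≠ 2) (α β γ : ZMod p) (h : β^2 - 4*α*γ ≠ 0) :
    ∃ t z : ZMod p, α + β*t+γ*t^2 = z^2 := by
  by_cases hγ : γ = 0
  · subst hγ
    have hβ : β ≠ 0 := by rintro rfl; simp at h
    refine ⟨-α/β, 0, ?_⟩
    field_simp; ring
  · obtain ⟨t, z, hz⟩ := FiniteField.exists_root_sum_quadratic (R := ZMod p)
      (f := C γ * X^2 + C β * X + C α) (g := C (-1) * X^2 + C 0 * X + C 0)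
      (degree_quadratic hγ) (degree_quadratic (by simp)) (by
        rw [ZMod.card]; exact (Fact.out : p.Prime).eq_two_or_odd.resolve_left hp)
    refine ⟨t, z, ?_⟩
    simp at hz
    linear_combination hz

lemma conicG (hp : p ≠ 2) (α β γ δ ε : ℤ_[p]) (h : ¬ (p:ℤ_[p]) ∣ β^2-4*α*γ) :
    ∃ t w : ℤ_[p], α+β*t+γ*t^2+(p*δ)*t^3+(p*ε)*t^4 = w^2 := by
  obtain ⟨t', z', hz⟩ := conic_mod hp (PadicInt.toZMod α) (PadicInt.toZMod β) (PadicInt.toZMod γ) (by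
    rw [← toZ] at h
    simpa [map_ofNat] using h)
  obtain ⟨t, rfl⟩ := toZ_surj t'
  obtain ⟨z, rfl⟩ := toZ_surj z'
  have hz : (p:ℤ_[p]) ∣ α+β*t+γ*t^2 - z^2 := by
    rw [← toZ]; simp [hz]
  have h2 := two_unit hp
  have hG : (p:ℤ_[p]) ∣ α+β*t+γ*t^2+(p*δ)*t^3+(p*ε)*t^4 - z^2 := by
    have := dvd_add hz (Dvd.intro (δ*t^3+ε*t^4) rfl : (p:ℤ_[p]) ∣ p * (δ*t^3+ε*t^4))
    convert! this using 1; ring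
  by_cases hzz : (p:ℤ_[p]) ∣ z
  · have hG0 : (p:ℤ_[p]) ∣ α+β*t+γ*t^2+(p*δ)*t^3+(p*ε)*t^4 := by
      have := dvd_add hG (hzz.mul_left z)
      convert! this using 1; ring
    have hQ0 : (p:ℤ_[p]) ∣ α+β*t+γ*t^2 := by
      have := dvd_add hz (hzz.mul_left z)
      convert! this using 1; ring
    obtain ⟨s, hs⟩ := hensel4 _ _ _ _ _ t (norm_lt_sq1 hG0 (by
      intro hd
      apply h
      have h1 : (p:ℤ_[p]) ∣ β + 2*γ*t := by
        have := dvd_sub hd (Dvd.intro (3*δ*t^2+4*ε*t^3) rfl : (p:ℤ_[p]) ∣ p * (3*δ*t^2+4*ε*t^3))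
        convert! this using 1; ring
      have := dvd_sub (h1.mul_left (β + 2*γ*t)) (hQ0.mul_left (4*γ))
      convert! this using 1; ring))
    exact ⟨s, 0, by rw [hs]; ring⟩
  · obtain ⟨w, hw⟩ := sqrt_of (norm_lt_sq1 hG (y := 2*z) (fun h =>
      (p_prime.dvd_or_dvd h).elim h2 hzz))
    exact ⟨t, w, hw⟩

lemma odd_step (hp : p ≠ 2) (f : BQ ℤ_[p]) (n : ℕ) (z : ℤ_[p]) (h1 : (p:ℤ_[p]) ∣ f.a - z^2)
    (hn : (p:ℤ_[p])^(2*n) ∣ f.a - z^2) (hS : ¬ Sol f) : (p:ℤ_[p])^(2*(n+1)) ∣ f.disc := by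
  obtain ⟨a, b, c, d, e⟩ := f
  simp only at h1 hn
  have h2 := two_unit hp
  have hz1 : (p:ℤ_[p]) ∣ z := by
    by_contra hc
    obtain ⟨w, hw⟩ := sqrt_of (norm_lt_sq1 h1 (y := 2*z) (fun h =>
      (p_prime.dvd_or_dvd h).elim h2 hc))
    exact hS ⟨1, 0, w, prim_one _, by simp [BQ.eval, hw]⟩
  have hzn : (p:ℤ_[p])^n ∣ z := by
    by_contra hc
    obtain ⟨w, hw⟩ := sqrt_of (norm_lt_sq (n := n) le_rfl hn (y := 2*z) (fun h => by
      apply hc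
      exact (p_prime.pow_dvd_of_dvd_mul_left n h2 h)))
    exact hS ⟨1, 0, w, prim_one _, by simp [BQ.eval, hw]⟩
  have ha1 : (p:ℤ_[p]) ∣ a := by
    have := dvd_add h1 (hz1.mul_left z)
    convert! this using 1; ring
  have han : (p:ℤ_[p])^(2*n) ∣ a := by
    have h3 : (p:ℤ_[p])^(2*n) ∣ z^2 := by
      rw [mul_comm, pow_mul]; exact pow_dvd_pow_of_dvd hzn 2
    have := dvd_add hn h3
    convert! this using 1; ring
  have root : ¬ ‖a‖ < ‖b‖^2 := by
    intro h
    obtain ⟨s, hs⟩ := hensel4 a b c d e 0 (by simpa using h)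
    exact hS ⟨1, s, 0, prim_one _, by simp only [BQ.eval]; linear_combination hs⟩
  have hb1 : (p:ℤ_[p]) ∣ b := by
    by_contra hc; exact root (norm_lt_sq1 ha1 hc)
  have hbn : (p:ℤ_[p])^n ∣ b := by
    by_contra hc; exact root (norm_lt_sq le_rfl han hc)
  have hu : (p:ℤ_[p]) ∣ d^2 - 4*e*c := by
    by_contra hc
    obtain ⟨a1, rfl⟩ := ha1
    obtain ⟨b1, rfl⟩ := hb1
    obtain ⟨t, w, hw⟩ := conicG hp e d c b1 a1 hc
    exact hS ⟨t, 1, w, prim_one' _, by simp only [BQ.eval]; linear_combination hw⟩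
  obtain ⟨U, hU⟩ := hu
  rcases Nat.eq_zero_or_pos n with rfl | hpos
  · obtain ⟨a1, rfl⟩ := ha1
    obtain ⟨b1, rfl⟩ := hb1
    have hd : d^2 = p*U + 4*e*c := by linear_combination hU
    generalize (p:ℤ_[p]) = q at *
    refine ⟨256*q*a1^3*e^3 - 192*q*a1^2*b1*d*e^2 - 128*a1^2*c^2*e^2 + 144*a1^2*c*d^2*e
      - 27*a1^2*d^4 + 144*q*a1*b1^2*c*e^2 - 6*q*a1*b1^2*d^2*e - 80*a1*b1*c^2*d*e
      + 18*a1*b1*c*d^3 - 4*a1*c^3*U - 27*q^2*b1^4*e^2 + 18*q*b1^3*c*d*e - 4*q*b1^3*d^3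
      - 4*b1^2*c^3*e+b1^2*c^2*d^2, ?_⟩
    simp only [BQ.disc]
    linear_combination (-4*q*a1*c^3)*hU
  · obtain ⟨m, rfl⟩ : ∃ m, n = m+1 := ⟨n-1, by omega⟩
    obtain ⟨a1, rfl⟩ := han
    obtain ⟨b1, rfl⟩ := hbn
    have hv : (p:ℤ_[p]) ∣ b1^2 - 4*a1*c := by
      by_contra hc
      obtain ⟨t, w, hw⟩ := conicG hp a1 b1 c (p^m*d) (p^(2*m+1)*e) hc
      refine hS ⟨1, p^(m+1)*t, p^(m+1)*w, prim_one _, ?_⟩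
      simp only [BQ.eval]
      linear_combination (p:ℤ_[p])^(2*(m+1)) * hw
    obtain ⟨V, hV⟩ := hv
    have key : BQ.disc (⟨(p:ℤ_[p])^(2*(m+1))*a1, (p:ℤ_[p])^(m+1)*b1, c, d, e⟩ : BQ ℤ_[p]) =
       (p:ℤ_[p])^(2*(m+1)) * (c^2*(d^2-4*e*c)*(b1^2-4*a1*c)
        + p^(m+1)*b1*(2*c*d*e*(b1^2-4*a1*c) + (18*a1*c-4*b1^2)*d*(d^2-4*e*c))
        + (p^(m+1))^2*(256*p^(2*(m+1))*a1^3*e^3 - 192*p^(m+1)*a1^2*b1*d*e^2 - 128*a1^2*c^2*e^2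
          + 144*a1^2*c*d^2*e - 27*a1^2*d^4+144*a1*b1^2*c*e^2-6*a1*b1^2*d^2*e-27*b1^4*e^2)) := by
      rw [mul_comm 2 (m+1), pow_mul]
      generalize (p:ℤ_[p])^(m+1) = P
      simp only [BQ.disc]; ring
    rw [key, hU, hV, mul_add 2 (m+1) 1, pow_add]
    apply mul_dvd_mul_left
    have hP : (p:ℤ_[p])^(m+1) = p * p^m := by ring
    rw [hP]
    refine dvd_add (dvd_add ⟨c^2*U*V, by ring⟩ ⟨p^m*b1*(2*c*d*e*V + (18*a1*c-4*b1^2)*d*U), by ring⟩) ?_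
    exact Dvd.dvd.mul_right (show (p:ℤ_[p])^(2*1) ∣ ((p:ℤ_[p])*(p:ℤ_[p])^m)^2 from
      ⟨((p:ℤ_[p])^m)^2, by ring⟩) _

lemma odd_zero (hp : p ≠ 2) (f : BQ ℤ_[p]) (hS : ¬ Sol f) : (p:ℤ_[p])^2 ∣ f.disc := by
  by_cases hex : ∃ x y z : ℤ_[p], Prim x y ∧ (p:ℤ_[p]) ∣ f.eval x y - z^2
  · obtain ⟨x, y, z, h1, h2⟩ := hex
    obtain ⟨g, hg1, hg2, hg3⟩ := move f x y h1
    rw [← hg2]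
    exact odd_step hp g 0 z (by rwa [hg1]) (by simp) (fun h => hS (hg3 h))
  · have hex' : ∀ x y z : ℤ_[p], Prim x y → ¬ (p:ℤ_[p]) ∣ f.eval x y - z^2 :=
      fun x y z h1 h2 => hex ⟨x, y, z, h1, h2⟩
    obtain ⟨a, b, c, d, e⟩ := f
    have ha : ¬ (p:ℤ_[p]) ∣ a := by
      simpa [BQ.eval] using hex' 1 0 0 (prim_one _)
    obtain ⟨k1, k2⟩ := ffall p hp (PadicInt.toZMod a) (PadicInt.toZMod b) (PadicInt.toZMod c)
      (PadicInt.toZMod d) (PadicInt.toZMod e) (by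
        intro z' hz
        obtain ⟨z, rfl⟩ := toZ_surj z'
        apply hex' 1 0 z (prim_one _)
        rw [← toZ]; simp [BQ.eval, hz]) (by
        intro x' z' hz
        obtain ⟨z, rfl⟩ := toZ_surj z'
        obtain ⟨x, rfl⟩ := toZ_surj x'
        apply hex' x 1 z (prim_one' _)
        rw [← toZ]; simp [BQ.eval, hz])
    have l1 : (p:ℤ_[p]) ∣ 8*a^2*d - (4*a*b*c-b^3) := by
      rw [← toZ]; simp [k1, map_ofNat]
    have l2 : (p:ℤ_[p]) ∣ 64*a^3*e - (4*a*c-b^2)^2 := by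
      rw [← toZ]; simp [k2, map_ofNat]
    obtain ⟨i, hi⟩ := ((not_dvd_iff a).mp ha).exists_right_inv
    obtain ⟨h, hh⟩ := ((not_dvd_iff 2).mp (two_unit hp)).exists_right_inv
    obtain ⟨D1, hD⟩ := l1
    obtain ⟨E1, hE⟩ := l2
    obtain ⟨t, ht⟩ : ∃ t, t = b*i*h := ⟨_, rfl⟩
    obtain ⟨s, hs⟩ : ∃ s, s = h*(c*i-t^2) := ⟨_, rfl⟩
    have hb : b = 2*a*t := by
      rw [ht]; linear_combination (-b)*hi*(2*h) - b*hh
    have hc : c = a*(2*s+t^2) := by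
      rw [hs]; linear_combination (-c)*hi*(2*h) - (c-a*t^2)*hh
    subst hb
    clear ht hs
    subst hc
    have hd : d = 2*a*t*s + p*(D1*i^2*h^3) := by
      have : d * (a*i)^2*(2*h)^3 = 2*a*t*s*(a*i)^2*(2*h)^3 + p*(D1*i^2*h^3) := by
        linear_combination (i^2*h^3)*hD
      rw [hi, hh] at this
      linear_combination this
    have he : e = a*s^2 + p*(E1*i^3*h^6) := by
      have : e * (a*i)^3*(2*h)^6 = a*s^2*(a*i)^3*(2*h)^6 + p*(E1*i^3*h^6) := by
        linear_combination (i^3*h^6)*hE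
      rw [hi, hh] at this
      linear_combination this
    generalize D1*i^2*h^3 = D at hd
    generalize E1*i^3*h^6 = E at he
    rw [hd, he]
    generalize (p:ℤ_[p]) = q
    refine ⟨-27*a^2*D^4*q^2 + 256*a^3*E^3*q + 288*a^3*s*D^2*E*q - 384*a^3*t*D*E^2*q
      - 144*a^3*t*s*D^3*q + 120*a^3*t^2*D^2*E*q + 4*a^3*t^3*D^3*q + 256*a^4*s^2*E^2
      + 256*a^4*s^3*D^2 - 256*a^4*t*s^2*D*E - 128*a^4*t^2*s*E^2 - 128*a^4*t^2*s^2*D^2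
      + 128*a^4*t^3*s*D*E + 16*a^4*t^4*E^2 + 16*a^4*t^4*s*D^2 - 16*a^4*t^5*D*E, ?_⟩
    simp only [BQ.disc]; ring

lemma par2 (x : ℤ_[2]) : (2:ℤ_[2]) ∣ x ∨ (2:ℤ_[2]) ∣ x - 1 := by
  have h1 := toZ x
  have h2 := toZ (x-1)
  simp only [Nat.cast_ofNat] at h1 h2
  rw [← h1, ← h2, map_sub, map_one]
  generalize PadicInt.toZMod x = y
  revert y; decide

lemma even_hensel (A B C' D E t : ℤ_[2]) (h : ¬ (2:ℤ_[2]) ∣ B+2*C'*t+3*D*t^2+4*E*t^3) :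
    ∃ s w : ℤ_[2], A+B*s+C'*s^2+D*s^3+E*s^4 = w^2 := by
  rcases par2 (A+B*t+C'*t^2+D*t^3+E*t^4) with h1 | h1
  · obtain ⟨s, hs⟩ := hensel4 A B C' D E t (norm_lt_sq1 (by exact_mod_cast h1) (by exact_mod_cast h))
    exact ⟨s, 0, by rw [hs]; ring⟩
  · obtain ⟨s, hs⟩ := hensel4 (A-1) B C' D E t (norm_lt_sq1 (by
      convert! h1 using 1; ring) (by exact_mod_cast h))
    exact ⟨s, 1, by linear_combination hs⟩

lemma even_step (f : BQ ℤ_[2]) (m : ℕ) (z : ℤ_[2])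
    (hn : (2:ℤ_[2])^(2*(m+1)) ∣ f.a - z^2) (hS : ¬ Sol f) : (2:ℤ_[2])^(2*(m+1)) ∣ f.disc := by
  obtain ⟨a, b, c, d, e⟩ := f
  simp only at hn
  have hz : (2:ℤ_[2])^m ∣ z := by
    by_contra hc
    obtain ⟨w, hw⟩ := sqrt_of (norm_lt_sq (n := m+1) le_rfl (by exact_mod_cast hn) (y := 2*z) (fun h => by
      apply hc
      rw [Nat.cast_ofNat, pow_succ'] at h
      exact (mul_dvd_mul_iff_left (by norm_num)).mp h))
    exact hS ⟨1, 0, w, prim_one _, by simp [BQ.eval, hw]⟩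
  obtain ⟨u, rfl⟩ := hz
  obtain ⟨w, rfl⟩ : (2:ℤ_[2])^(2*m) ∣ a := by
    obtain ⟨v, hv⟩ := hn
    exact ⟨u^2+4*v, by linear_combination hv⟩
  have hb : (2:ℤ_[2])^m ∣ b := by
    by_contra hc
    obtain ⟨s, hs⟩ := hensel4 (2^(2*m)*w) b c d e 0 (by
      have := norm_lt_sq (n := m) (N := 2*m) (x := 2^(2*m)*w) (y := b) le_rfl
        (by rw [Nat.cast_ofNat]; exact Dvd.intro _ rfl) (by exact_mod_cast hc)
      simpa using this)
    exact hS ⟨1, s, 0, prim_one _, by simp only [BQ.eval]; linear_combination hs⟩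
  obtain ⟨b1, rfl⟩ := hb
  have hb1 : (2:ℤ_[2]) ∣ b1 := by
    by_contra hc
    obtain ⟨s, v, hs⟩ := even_hensel w b1 c (2^m*d) (2^(2*m)*e) 0 (by simpa using hc)
    refine hS ⟨1, 2^m*s, 2^m*v, prim_one _, ?_⟩
    simp only [BQ.eval]
    linear_combination (2:ℤ_[2])^(2*m)*hs
  obtain ⟨b2, rfl⟩ := hb1
  have hfin : (2:ℤ_[2]) ∣ 2^m*d := by
    by_contra hc
    rcases Nat.eq_zero_or_pos m with rfl | hpos
    · rw [pow_zero, one_mul] at hc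
      obtain ⟨s, v, hs⟩ := even_hensel (2^(2*0)*w) (2^0*(2*b2)) c d e 1 (by
        intro h
        apply hc
        have := dvd_sub h (Dvd.intro (b2+c+d+2*e) rfl : (2:ℤ_[2]) ∣ 2*(b2+c+d+2*e))
        convert! this using 1; ring)
      exact hS ⟨1, s, v, prim_one _, by simp only [BQ.eval]; linear_combination hs⟩
    · exact hc (Dvd.dvd.mul_right (dvd_pow_self _ (by omega)) _)
  obtain ⟨g, hg⟩ := hfin
  rw [mul_add 2 m 1, pow_add]
  rw [mul_comm 2 m, pow_mul]
  generalize (2:ℤ_[2])^m = P at *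
  refine ⟨64*P^4*w^3*e^3 - 96*P^3*w^2*b2*d*e^2 - 32*P^2*w^2*c^2*e^2 + 36*P^2*w^2*c*d^2*e
    - 27*w^2*g^2*d^2 + 144*P^2*w*b2^2*c*e^2 - 6*P^2*w*b2^2*d^2*e - 40*P*w*b2*c^2*d*e
    + 9*P*w*b2*c*d^3 + 4*w*c^4*e - w*c^3*d^2 - 108*P^2*b2^4*e^2 + 36*P*b2^3*c*d*e
    - 8*P*b2^3*d^3 - 4*b2^2*c^3*e + b2^2*c^2*d^2, ?_⟩
  simp only [BQ.disc]
  linear_combination (-27*P^2*w^2*d^2)*(P*d+2*g)*hg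

lemma main_four (n : ℕ) (f : BQ ℤ_[p]) (h : Sk n f) (hS : ¬ Sol f) :
    (p ≠ 2 → (p : ℤ_[p]) ^ (2 * (n+1)) ∣ f.disc) ∧
        (p = 2 → (p : ℤ_[p]) ^ (2 * (n+1) - 2) ∣ f.disc) := by
  have h2n : 2*(n+1)-2 = 2*n := by omega
  rw [h2n]
  rcases Nat.eq_zero_or_pos n with rfl | hpos
  · exact ⟨fun hp => odd_zero hp f hS, fun _ => by simp⟩
  obtain ⟨x, y, z, h1, h2⟩ := h
  obtain ⟨g, hg1, hg2, hg3⟩ := move f x y h1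
  rw [← hg1] at h2
  rw [← hg2]
  have hS' : ¬ Sol g := fun h => hS (hg3 h)
  constructor
  · intro hp
    exact odd_step hp g n z ((dvd_pow_self _ (by omega)).trans h2) h2 hS'
  · rintro rfl
    obtain ⟨m, rfl⟩ : ∃ m, n = m+1 := ⟨n-1, by omega⟩
    have := even_step g m z (by exact_mod_cast h2) hS'
    exact_mod_cast this

lemma LP_mem (k : ℕ) (f : BQ ℤ_[p]) : LP k f = 0 ∨ LP k f = 1 := by
  rw [LP_eq]; split_ifs <;> simp

lemma LP_congr (k : ℕ) {f g : BQ ℤ_[p]} (h : Sk k f ↔ Sk k g) : LP k f = LP k g := by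
  rw [LP_eq, LP_eq]; simp only [h]

lemma sk_congr_iff {k : ℕ} {f g : BQ ℤ_[p]} (h : CongMod (2*k) f g) : Sk k f ↔ Sk k g :=
  ⟨fun hf => hf.congr h.symm, fun hg => hg.congr h⟩

lemma CongMod.mono {i j : ℕ} (hij : i ≤ j) {f g : BQ ℤ_[p]} (h : CongMod j f g) : CongMod i f g := by
  have := pow_dvd_pow (p : ℤ_[p]) hij
  obtain ⟨h1, h2, h3, h4, h5⟩ := h
  exact ⟨this.trans h1, this.trans h2, this.trans h3, this.trans h4, this.trans h5⟩

lemma sum_ell (f : BQ ℤ_[p]) (n : ℕ) : ∑ k ∈ Finset.range (n+1), ellPk k f = LP n f := by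
  induction n with
  | zero => simp [ellPk]
  | succ n ih => rw [Finset.sum_range_succ, ih]; simp [ellPk]

lemma Sk.anti {f : BQ ℤ_[p]} {i j : ℕ} (hij : i ≤ j) (h : Sk j f) : Sk i f := by
  obtain ⟨x, y, z, h1, h2⟩ := h
  exact ⟨x, y, z, h1, (pow_dvd_pow _ (by omega)).trans h2⟩

lemma has_sum (f : BQ ℤ_[p]) : HasSum (fun k => ellPk k f) (ellP f) := by
  obtain ⟨N, hN⟩ : ∃ N, ∀ k, N ≤ k → LP k f = ellP f := by
    by_cases h : Sol f
    · refine ⟨0, fun k _ => ?_⟩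
      rw [LP_eq, ellP, if_pos (h.sk k), if_pos ((sol_iff f).mpr h)]
    · have : ∃ N, ¬ Sk N f := by
        by_contra hc; push Not at hc; exact h (sol_of_all f hc)
      obtain ⟨N, hN⟩ := this
      refine ⟨N, fun k hk => ?_⟩
      rw [LP_eq, ellP, if_neg (fun hh => hN (hh.anti hk)), if_neg (fun hh => h ((sol_iff f).mp hh))]
  rw [← hN N le_rfl, ← sum_ell]
  apply hasSum_sum_of_ne_finset_zero
  intro k hk
  simp only [Finset.mem_range, not_lt] at hk
  obtain ⟨j, rfl⟩ : ∃ j, k = j+1 := ⟨k-1, by omega⟩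
  simp only [ellPk]
  rw [hN _ (by omega), hN _ (by omega), sub_self]

/-- The periodic approximations `ℓ_p^{(k)}` of the local solubility
function `ℓ_p`: (i) `L_p^{(0)} ≡ 1` and `|ℓ_p^{(k)}| ≤ 1`; (ii) each `ℓ_p^{(k)}` is defined
modulo `p^{2k}` and is `PGL₂(ℤ_p)`-invariant; (iii) for `Δ(f) ≠ 0` the series
`Σ_k ℓ_p^{(k)}(f)` sums to `ℓ_p(f)`; (iv) for `k ≥ 1`, the support of `ℓ_p^{(k)}` consists of
forms with `p^{2k} ∣ Δ(f)` for odd `p`, and `2^{2k−2} ∣ Δ(f)` for `p = 2`. -/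
theorem solubility_approximation (p : ℕ) [Fact p.Prime] :
    (∀ f : BQ ℤ_[p], LP 0 f = 1) ∧
    (∀ (k : ℕ) (f : BQ ℤ_[p]), |ellPk k f| ≤ 1) ∧
    (∀ (k : ℕ) (f g : BQ ℤ_[p]), CongMod (2 * k) f g → ellPk k f = ellPk k g) ∧
    (∀ (k : ℕ) (m : Mat2 ℤ_[p]) (f : BQ ℤ_[p]), IsUnit m.det →
        ellPk k (f.twist m) = ellPk k f) ∧
    (∀ f : BQ ℤ_[p], f.disc ≠ 0 → HasSum (fun k => ellPk k f) (ellP f)) ∧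
    (∀ (k : ℕ) (f : BQ ℤ_[p]), 1 ≤ k → ellPk k f ≠ 0 →
        (p ≠ 2 → (p : ℤ_[p]) ^ (2 * k) ∣ f.disc) ∧
        (p = 2 → (p : ℤ_[p]) ^ (2 * k - 2) ∣ f.disc)) := by
  refine ⟨?_, ?_, ?_, ?_, fun f _ => has_sum f, ?_⟩
  · intro f
    rw [LP_eq, if_pos (sk_zero f)]
  · intro k f
    cases k with
    | zero => rcases LP_mem 0 f with h | h <;> simp [ellPk, h]
    | succ k =>
      rcases LP_mem k f with h | h <;> rcases LP_mem (k+1) f with h' | h' <;> simp [ellPk, h, h']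
  · intro k f g h
    cases k with
    | zero => exact LP_congr 0 (sk_congr_iff h)
    | succ k =>
      simp only [ellPk]
      rw [LP_congr (k+1) (sk_congr_iff h), LP_congr k (sk_congr_iff (h.mono (by omega)))]
  · intro k m f hm
    cases k with
    | zero => exact LP_congr 0 (sk_twist 0 m hm f)
    | succ k =>
      simp only [ellPk]
      rw [LP_congr (k+1) (sk_twist (k+1) m hm f), LP_congr k (sk_twist k m hm f)]
  · intro k f hk hne
    obtain ⟨n, rfl⟩ : ∃ n, k = n+1 := ⟨k-1, by omega⟩
    simp only [ellPk] at hne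
    have hn1 : ¬ Sk (n+1) f := by
      intro h
      apply hne
      rw [LP_eq, LP_eq, if_pos h, if_pos h.mono, sub_self]
    have hn : Sk n f := by
      by_contra h
      apply hne
      rw [LP_eq, LP_eq, if_neg h, if_neg hn1, sub_self]
    exact main_four n f hn (fun h => hn1 (h.sk _))

end BQPaper
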